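/- arXiv:1501.00903 — 2 statements merged into one kernel-verified Lean document; each statement's English description precedes it below -/
import Mathlib

section
/- For every n ≥ 0, the variance V_n of the number of non-zero-blocks of a uniformly random (c,m)-colored B_n-partition satisfies V_n = T_{n+2}/(m²·T_n) − T_{n+1}²/(m²·T_n²) − 1/m, where V_n = (Σ_{k=0}^{n} k²·T_{n,k})/T_n − ((Σ_{k=0}^{n} k·T_{n,k})/T_n)². -/
def Tnk (m c : ℕ) : ℕ → ℕ → ℕ
  | 0, 0 => 1
  | 0, _ + 1 => 0
  | n + 1, 0 => c * Tnk m c n 0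
  | n + 1, k + 1 => Tnk m c n k + (m * (k + 1) + c) * Tnk m c n (k + 1)

def Ttot (m c n : ℕ) : ℕ := ∑ k ∈ Finset.range (n + 1), Tnk m c n k

/-- The variance `V_n = (∑_k k²·T_{n,k})/T_n − ((∑_k k·T_{n,k})/T_n)²` of the
number of non-zero-blocks. -/
noncomputable def Vn (m c n : ℕ) : ℝ :=
  (∑ k ∈ Finset.range (n + 1), (k : ℝ) ^ 2 * Tnk m c n k) / Ttot m c n -
    ((∑ k ∈ Finset.range (n + 1), (k : ℝ) * Tnk m c n k) / Ttot m c n) ^ 2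

/-!
Summing the recurrence over `k` shows that the affine image `η = m ξ_n + c + 1` satisfies
`E η = T_{n+1} / T_n`, and summing it twice gives `E η² = T_{n+2} / T_n - m`; the excess `m` comes
from the shift `k ↦ k + 1` raising the factor `m k + c + 1` by `m`. Since `Var η = m² Var ξ_n`,
the variance follows.
-/

section

variable (m c : ℕ)

theorem Tnk_eq_zero_of_lt : ∀ {n k : ℕ}, n < k → Tnk m c n k = 0
  | 0, _ + 1, _ => rfl
  | n + 1, k + 1, h => by
    have hk : n < k := Nat.lt_of_succ_lt_succ h
    rw [Tnk, Tnk_eq_zero_of_lt hk, Tnk_eq_zero_of_lt (hk.trans k.lt_succ_self), mul_zero, add_zero]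

theorem Tnk_self (n : ℕ) : Tnk m c n n = 1 := by
  induction n with
  | zero => rfl
  | succ n ih => rw [Tnk, ih, Tnk_eq_zero_of_lt m c n.lt_succ_self, mul_zero, add_zero]

theorem Ttot_pos (n : ℕ) : 0 < Ttot m c n :=
  Finset.sum_pos' (fun _ _ => Nat.zero_le _)
    ⟨n, Finset.self_mem_range_succ n, by rw [Tnk_self]; exact one_pos⟩

theorem sum_mul_Tnk_succ {R : Type*} [CommSemiring R] (f : ℕ → R) (n : ℕ) :
    ∑ k ∈ Finset.range (n + 2), f k * Tnk m c (n + 1) k =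
      ∑ k ∈ Finset.range (n + 1), (f (k + 1) + (m * k + c) * f k) * Tnk m c n k := by
  have extend_range : ∑ k ∈ Finset.range (n + 1), (m * k + c) * f k * Tnk m c n k =
      ∑ k ∈ Finset.range (n + 2), (m * k + c) * f k * Tnk m c n k := by
    rw [Finset.sum_range_succ _ (n + 1), Tnk_eq_zero_of_lt m c n.lt_succ_self, Nat.cast_zero,
      mul_zero, add_zero]
  have succ_term (k : ℕ) : f (k + 1) * Tnk m c (n + 1) (k + 1) =
      f (k + 1) * Tnk m c n k + (m * ↑(k + 1) + c) * f (k + 1) * Tnk m c n (k + 1) := by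
    rw [Tnk]; push_cast; ring
  have zero_term : f 0 * Tnk m c (n + 1) 0 = (m * ↑(0 : ℕ) + c) * f 0 * Tnk m c n 0 := by
    rw [Tnk]; push_cast; ring
  simp only [add_mul (f _)]
  rw [Finset.sum_add_distrib, extend_range, Finset.sum_range_succ',
    Finset.sum_range_succ' _ (n + 1), ← add_assoc, ← Finset.sum_add_distrib, zero_term]
  simp only [succ_term]

theorem Ttot_succ (n : ℕ) :
    Ttot m c (n + 1) = ∑ k ∈ Finset.range (n + 1), (m * k + c + 1) * Tnk m c n k := by
  have h := sum_mul_Tnk_succ m c (fun _ => (1 : ℕ)) n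
  simp only [one_mul, mul_one, Nat.cast_id] at h
  rw [Ttot, h]
  exact Finset.sum_congr rfl fun k _ => by ring

theorem Ttot_add_two (n : ℕ) :
    Ttot m c (n + 2) =
      ∑ k ∈ Finset.range (n + 1), (m * k + c + 1) ^ 2 * Tnk m c n k + m * Ttot m c n := by
  have h := sum_mul_Tnk_succ m c (fun k => m * k + c + 1) n
  simp only [Nat.cast_id] at h
  rw [Ttot_succ, h, Ttot, Finset.mul_sum, ← Finset.sum_add_distrib]
  exact Finset.sum_congr rfl fun k _ => by ring

end

theorem weighted_variance_affine {ι K : Type*} [Field K] (s : Finset ι) (w x : ι → K) (a b : K)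
    (hw : ∑ i ∈ s, w i ≠ 0) :
    (∑ i ∈ s, (a * x i + b) ^ 2 * w i) / ∑ i ∈ s, w i -
        ((∑ i ∈ s, (a * x i + b) * w i) / ∑ i ∈ s, w i) ^ 2 =
      a ^ 2 * ((∑ i ∈ s, x i ^ 2 * w i) / ∑ i ∈ s, w i -
        ((∑ i ∈ s, x i * w i) / ∑ i ∈ s, w i) ^ 2) := by
  have first_moment : ∑ i ∈ s, (a * x i + b) * w i =
      a * ∑ i ∈ s, x i * w i + b * ∑ i ∈ s, w i := by
    simp only [Finset.mul_sum, ← Finset.sum_add_distrib]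
    exact Finset.sum_congr rfl fun i _ => by ring
  have second_moment : ∑ i ∈ s, (a * x i + b) ^ 2 * w i =
      a ^ 2 * ∑ i ∈ s, x i ^ 2 * w i + 2 * a * b * ∑ i ∈ s, x i * w i +
        b ^ 2 * ∑ i ∈ s, w i := by
    simp only [Finset.mul_sum, ← Finset.sum_add_distrib]
    exact Finset.sum_congr rfl fun i _ => by ring
  rw [first_moment, second_moment]
  field_simp
  ring

/-- For `m = 1`, `c = 0` this is Harper's formula for the number of blocks of a uniformly random
set partition. -/
theorem stmt_5_general (m c n : ℕ) :
    (m : ℝ) ^ 2 * Vn m c n =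
      Ttot m c (n + 2) / Ttot m c n - (Ttot m c (n + 1) / Ttot m c n : ℝ) ^ 2 - m := by
  have hT : (Ttot m c n : ℝ) ≠ 0 := Nat.cast_ne_zero.mpr (Ttot_pos m c n).ne'
  have hsum : (Ttot m c n : ℝ) = ∑ k ∈ Finset.range (n + 1), (Tnk m c n k : ℝ) :=
    Nat.cast_sum _ _
  have variance_affine := weighted_variance_affine (Finset.range (n + 1))
    (fun k => (Tnk m c n k : ℝ)) (fun k => (k : ℝ)) m (c + 1) (hsum ▸ hT)
  rw [← hsum] at variance_affine
  rw [Vn, ← variance_affine, Ttot_add_two, Ttot_succ]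
  push_cast
  simp only [add_assoc]
  rw [add_div, mul_div_cancel_right₀ _ hT]
  ring

/-- `V_n = T_{n+2}/(m²·T_n) − T_{n+1}²/(m²·T_n²) − 1/m`. -/
theorem stmt_5 (m c : ℕ) (hm : 0 < m) (hc : 0 < c) (n : ℕ) :
    Vn m c n =
      (Ttot m c (n + 2) : ℝ) / ((m : ℝ) ^ 2 * Ttot m c n) -
        (Ttot m c (n + 1) : ℝ) ^ 2 / ((m : ℝ) ^ 2 * (Ttot m c n : ℝ) ^ 2) -
        1 / m := by
  have hm' : (m : ℝ) ≠ 0 := Nat.cast_ne_zero.mpr hm.ne'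
  rw [← mul_right_inj' (pow_ne_zero 2 hm'), stmt_5_general]
  field_simp
end

section
/- Let f(x) = x·(e^{m·x} + c), and for each i ∈ {0,1,2} let t_i = t_i(n) be the unique positive real number with f(t_i) = n + i. Then as n → ∞, 2·t_1 − t_0 − t_2 = 1/(m·n²) + O(1/(n²·log n)). -/
/-!
Write `f x = x * (exp (m * x) + c)`. If `t₀ < t₁ < t₂` are mapped by `f` to `y`, `y + 1`, `y + 2`,
then `2 * t₁ - t₀ - t₂` is minus a second difference of the inverse function of `f`, hence equals
`f'' γ / f' γ ^ 3` for some `γ` between `t₀` and `t₂`. Dividing by powers of `x * exp (m * x)`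
shows that `f x ^ 2 * f'' x / f' x ^ 3` is a smooth function of `c * exp (-(m * x))` and `x⁻¹` with
value `1 / m` at the origin, so it is `1 / m + O(1 / x)`. Finally `log (f x) = O(x)` and
`y < f γ < y + 2` turn this into the claimed expansion in `y`.
-/

open Filter Asymptotics Set Topology

section InverseSecondDifference

variable {f f' : ℝ → ℝ}

theorem exists_div_deriv_eq_deriv_comp {p p' : ℝ → ℝ} {a b k : ℝ} (hab : a < b)
    (hf : ∀ x ∈ Icc a b, HasDerivAt f (f' x) x) (hne : ∀ x ∈ Ioo a b, f' x ≠ 0)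
    (hp : ∀ z, HasDerivAt p (p' z) z) (h : k * (b - a) = p (f b) - p (f a)) :
    ∃ x ∈ Ioo a b, k / f' x = p' (f x) := by
  have hφ : ∀ x ∈ Icc a b, HasDerivAt (fun x ↦ k * x - p (f x)) (k * 1 - p' (f x) * f' x) x :=
    fun x hx ↦ ((hasDerivAt_id x).const_mul k).sub ((hp (f x)).comp x (hf x hx))
  obtain ⟨x, hx, hx0⟩ := exists_hasDerivAt_eq_zero hab
    (fun x hx ↦ (hφ x hx).continuousAt.continuousWithinAt) (by linarith)
    (fun x hx ↦ hφ x (Ioo_subset_Icc_self hx))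
  refine ⟨x, hx, (div_eq_iff (hne x hx)).2 ?_⟩
  linarith

theorem exists_second_difference_inverse_eq {f'' : ℝ → ℝ} {a b d y h : ℝ}
    (hab : a < b) (hbd : b < d) (ha : f a = y) (hb : f b = y + h) (hd : f d = y + 2 * h)
    (hf : ∀ x ∈ Icc a d, HasDerivAt f (f' x) x) (hf' : ∀ x ∈ Ioo a d, HasDerivAt f' (f'' x) x)
    (hne : ∀ x ∈ Ioo a d, f' x ≠ 0) :
    ∃ γ ∈ Ioo a d, 2 * b - a - d = h ^ 2 * f'' γ / f' γ ^ 3 := by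
  -- Up to an additive constant, `p` is `h ^ 2` times the quadratic polynomial interpolating the
  -- inverse function at `y`, `y + h`, `y + 2 * h`.
  let p (z : ℝ) : ℝ :=
    h * ((d - a) / 2) * (z - (y + h)) + (a - 2 * b + d) / 2 * (z - (y + h)) ^ 2
  let p' (z : ℝ) : ℝ := h * ((d - a) / 2) + (a - 2 * b + d) * (z - (y + h))
  have hp (z : ℝ) : HasDerivAt p (p' z) z := by
    have hz := (hasDerivAt_id z).sub_const (y + h)
    refine ((hz.const_mul _).add ((hz.pow 2).const_mul _)).congr_deriv ?_
    simp only [p', id]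
    ring
  obtain ⟨α, hα, hα_eq⟩ := exists_div_deriv_eq_deriv_comp (k := h ^ 2) hab
    (fun x hx ↦ hf x (Icc_subset_Icc_right hbd.le hx))
    (fun x hx ↦ hne x (Ioo_subset_Ioo_right hbd.le hx)) hp (by simp only [p, ha, hb]; ring)
  obtain ⟨β, hβ, hβ_eq⟩ := exists_div_deriv_eq_deriv_comp (k := h ^ 2) hbd
    (fun x hx ↦ hf x (Icc_subset_Icc_left hab.le hx))
    (fun x hx ↦ hne x (Ioo_subset_Ioo_left hab.le hx)) hp (by simp only [p, hb, hd]; ring)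
  have hsub : Icc α β ⊆ Ioo a d := Icc_subset_Ioo hα.1 hβ.2
  have hψ : ∀ x ∈ Icc α β, HasDerivAt (fun x ↦ h ^ 2 / f' x - p' (f x))
      (-(h ^ 2 * f'' x) / f' x ^ 2 - (a - 2 * b + d) * f' x) x := fun x hx ↦ by
    have hx := hsub hx
    have hfx := (hf x (Ioo_subset_Icc_self hx)).sub_const (y + h)
    refine (((hasDerivAt_const x (h ^ 2)).div (hf' x hx) (hne x hx)).sub
      ((hfx.const_mul (a - 2 * b + d)).const_add _)).congr_deriv ?_
    ring
  obtain ⟨γ, hγ, hγ0⟩ := exists_hasDerivAt_eq_zero (hα.2.trans hβ.1)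
    (fun x hx ↦ (hψ x hx).continuousAt.continuousWithinAt)
    (by rw [hα_eq, hβ_eq, sub_self, sub_self]) (fun x hx ↦ hψ x (Ioo_subset_Icc_self hx))
  have hγ_mem := hsub (Ioo_subset_Icc_self hγ)
  have hγ_ne := hne γ hγ_mem
  refine ⟨γ, hγ_mem, ?_⟩
  field_simp at hγ0 ⊢
  linarith

end InverseSecondDifference

section Nearby

variable {ι : Type*} {l : Filter ι} {y z : ι → ℝ} {h : ℝ}

theorem isBigO_one_div_sq_mul_log_of_le (hy : Tendsto y l atTop) (hyz : ∀ᶠ i in l, y i ≤ z i) :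
    (fun i ↦ 1 / (z i ^ 2 * Real.log (z i))) =O[l] fun i ↦ 1 / (y i ^ 2 * Real.log (y i)) := by
  refine IsBigO.of_bound' ?_
  filter_upwards [hy.eventually_gt_atTop 1, hyz] with i hi hyz
  have hlog : 0 < Real.log (y i) := Real.log_pos hi
  have hloglog : Real.log (y i) ≤ Real.log (z i) := Real.log_le_log (by linarith) hyz
  have hlogz : 0 < Real.log (z i) := hlog.trans_le hloglog
  rw [Real.norm_of_nonneg (by positivity), Real.norm_of_nonneg (by positivity)]
  gcongr

theorem isBigO_one_div_sq_sub_of_mem_Icc (hy : Tendsto y l atTop)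
    (hyz : ∀ᶠ i in l, z i ∈ Icc (y i) (y i + h)) :
    (fun i ↦ 1 / z i ^ 2 - 1 / y i ^ 2) =O[l] fun i ↦ 1 / (y i ^ 2 * Real.log (y i)) := by
  refine IsBigO.of_bound (2 * h) ?_
  filter_upwards [hy.eventually_gt_atTop 1, hyz] with i hi ⟨hle, hge⟩
  have hy0 : 0 < y i := by linarith
  have hz0 : 0 < z i := by linarith
  have hh : 0 ≤ h := by linarith
  have hlog : 0 < Real.log (y i) := Real.log_pos hi
  have hnonpos : 1 / z i ^ 2 - 1 / y i ^ 2 ≤ 0 := sub_nonpos.2 (by gcongr)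
  rw [Real.norm_of_nonpos hnonpos, Real.norm_of_nonneg (by positivity)]
  calc -(1 / z i ^ 2 - 1 / y i ^ 2) = (z i - y i) * (z i + y i) / (y i ^ 2 * z i ^ 2) := by
        field_simp
        ring
    _ ≤ h * (2 * z i) / (y i ^ 2 * z i ^ 2) := by
        gcongr <;> linarith
    _ = 2 * h * (1 / (y i ^ 2 * z i)) := by
        field_simp
    _ ≤ 2 * h * (1 / (y i ^ 2 * Real.log (y i))) := by
        gcongr
        exact (Real.log_le_self hy0.le).trans hle

end Nearby

/-- The function `f x = x * (exp (m * x) + c)` on the whole line, with real parameters. Second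
differences of its inverse near infinity are the subject of the theorem. -/
noncomputable def mulExpAdd (m c x : ℝ) : ℝ := x * (Real.exp (m * x) + c)

section MulExpAdd

variable {m c : ℝ}

theorem hasDerivAt_mulExpAdd (m c x : ℝ) :
    HasDerivAt (mulExpAdd m c) (Real.exp (m * x) * (1 + m * x) + c) x := by
  refine ((hasDerivAt_id x).mul
    ((((hasDerivAt_id x).const_mul m).exp).add_const c)).congr_deriv ?_
  simp only [id]
  ring

theorem deriv_mulExpAdd (m c : ℝ) :
    deriv (mulExpAdd m c) = fun x ↦ Real.exp (m * x) * (1 + m * x) + c :=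
  deriv_eq (hasDerivAt_mulExpAdd m c)

theorem hasDerivAt_deriv_mulExpAdd (m c x : ℝ) :
    HasDerivAt (deriv (mulExpAdd m c)) (Real.exp (m * x) * (2 * m + m ^ 2 * x)) x := by
  rw [deriv_mulExpAdd]
  have hlin : HasDerivAt (fun x ↦ m * x) (m * 1) x := (hasDerivAt_id x).const_mul m
  exact ((hlin.exp.mul (hlin.const_add 1)).add_const c).congr_deriv (by ring)

theorem deriv_mulExpAdd_pos (hm : 0 < m) {x : ℝ} (hx : |c| / m ≤ x) :
    0 < deriv (mulExpAdd m c) x := by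
  rw [deriv_mulExpAdd]
  have hmx : |c| ≤ m * x := (div_le_iff₀' hm).1 hx
  have hmx0 : 0 ≤ m * x := (abs_nonneg c).trans hmx
  have hexp : 1 + m * x ≤ Real.exp (m * x) * (1 + m * x) :=
    le_mul_of_one_le_left (by positivity) (Real.one_le_exp hmx0)
  linarith [neg_abs_le c]

theorem strictMonoOn_mulExpAdd (hm : 0 < m) : StrictMonoOn (mulExpAdd m c) (Ici (|c| / m)) :=
  strictMonoOn_of_deriv_pos (convex_Ici _)
    (fun x _ ↦ (hasDerivAt_mulExpAdd m c x).continuousAt.continuousWithinAt)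
    (fun _ hx ↦ deriv_mulExpAdd_pos hm (interior_subset hx))

theorem mulExpAdd_le_exp (hm : 0 ≤ m) {x : ℝ} (hx : 0 ≤ x) :
    mulExpAdd m c x ≤ Real.exp ((m + 1) * x + |c|) := by
  have hexp : 1 ≤ Real.exp (m * x) := Real.one_le_exp (by positivity)
  have hc : Real.exp (m * x) + c ≤ Real.exp (m * x) * Real.exp |c| := by
    nlinarith [Real.add_one_le_exp |c|, le_abs_self c, abs_nonneg c]
  calc mulExpAdd m c x ≤ x * (Real.exp (m * x) * Real.exp |c|) :=
        mul_le_mul_of_nonneg_left hc hx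
    _ ≤ Real.exp x * (Real.exp (m * x) * Real.exp |c|) := by
        gcongr
        linarith [Real.add_one_le_exp x]
    _ = Real.exp ((m + 1) * x + |c|) := by
        rw [← Real.exp_add, ← Real.exp_add]
        ring_nf

theorem log_mulExpAdd_le (hm : 0 ≤ m) {x : ℝ} (hx : 0 ≤ x) (hpos : 0 < mulExpAdd m c x) :
    Real.log (mulExpAdd m c x) ≤ (m + 1) * x + |c| :=
  (Real.log_le_iff_le_exp hpos).2 (mulExpAdd_le_exp hm hx)

theorem tendsto_mulExpAdd_atTop (hm : 0 < m) : Tendsto (mulExpAdd m c) atTop atTop :=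
  tendsto_id.atTop_mul_atTop₀ <| tendsto_atTop_add_const_right _ _ <|
    Real.tendsto_exp_atTop.comp (tendsto_id.const_mul_atTop hm)

theorem tendsto_atTop_of_mulExpAdd_eq {ι : Type*} {l : Filter ι} {t y : ι → ℝ} (hm : 0 ≤ m)
    (hy : Tendsto y l atTop) (ht : ∀ᶠ i in l, 0 < t i ∧ mulExpAdd m c (t i) = y i) :
    Tendsto t l atTop := by
  have hlog := tendsto_atTop_add_const_right _ (-|c|) (Real.tendsto_log_atTop.comp hy)
  refine Tendsto.atTop_of_const_mul₀ (show 0 < m + 1 by linarith) (tendsto_atTop_mono' l ?_ hlog)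
  filter_upwards [ht, hy.eventually_gt_atTop 0] with i ⟨hi, hfi⟩ hpos
  rw [← hfi] at hpos
  simpa [← hfi] using log_mulExpAdd_le hm hi.le hpos

theorem isBigO_log_mulExpAdd (hm : 0 < m) :
    (fun x ↦ Real.log (mulExpAdd m c x)) =O[atTop] fun x ↦ x := by
  refine IsBigO.of_bound (m + 1 + |c|) ?_
  filter_upwards [eventually_ge_atTop 1,
    (tendsto_mulExpAdd_atTop (c := c) hm).eventually_ge_atTop 1] with x hx hfx
  rw [Real.norm_of_nonneg (Real.log_nonneg hfx), Real.norm_of_nonneg (by linarith)]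
  nlinarith [log_mulExpAdd_le hm.le (by linarith) (by linarith : 0 < mulExpAdd m c x),
    abs_nonneg c]

theorem isBigO_exp_neg_mul_inv (hm : 0 < m) :
    (fun x ↦ Real.exp (-(m * x))) =O[atTop] fun x : ℝ ↦ x⁻¹ := by
  simpa only [neg_mul, Real.rpow_neg_one] using (isLittleO_exp_neg_mul_rpow_atTop hm (-1)).isBigO

theorem sq_mul_deriv_deriv_div_mulExpAdd_eq (m c : ℝ) {x : ℝ} (hx : x ≠ 0) :
    mulExpAdd m c x ^ 2 * deriv (deriv (mulExpAdd m c)) x / deriv (mulExpAdd m c) x ^ 3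
      = (1 + c * Real.exp (-(m * x))) ^ 2 * (m ^ 2 + 2 * m * x⁻¹)
        / (m + x⁻¹ * (1 + c * Real.exp (-(m * x)))) ^ 3 := by
  have hexp := Real.exp_ne_zero (m * x)
  have hden : m + x⁻¹ * (1 + c * Real.exp (-(m * x)))
      = deriv (mulExpAdd m c) x / (x * Real.exp (m * x)) := by
    rw [deriv_mulExpAdd, Real.exp_neg]
    field_simp
    ring
  rw [hden, div_pow, div_div_eq_mul_div, (hasDerivAt_deriv_mulExpAdd m c x).deriv, mulExpAdd,
    Real.exp_neg]
  congr 1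
  field_simp
  ring

theorem isBigO_sq_mul_deriv_deriv_div_mulExpAdd_sub (hm : 0 < m) :
    (fun x ↦ mulExpAdd m c x ^ 2 * deriv (deriv (mulExpAdd m c)) x / deriv (mulExpAdd m c) x ^ 3
      - 1 / m) =O[atTop] fun x : ℝ ↦ x⁻¹ := by
  let F (p : ℝ × ℝ) : ℝ := (1 + p.1) ^ 2 * (m ^ 2 + 2 * m * p.2) / (m + p.2 * (1 + p.1)) ^ 3
  let v (x : ℝ) : ℝ × ℝ := (c * Real.exp (-(m * x)), x⁻¹)
  have hv : v =O[atTop] fun x : ℝ ↦ x⁻¹ :=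
    ((isBigO_exp_neg_mul_inv hm).const_mul_left c).prod_left (isBigO_refl _ _)
  have hv0 : Tendsto v atTop (𝓝 0) := hv.trans_tendsto tendsto_inv_atTop_zero
  have hF : DifferentiableAt ℝ F 0 := by
    have : (m + (0 : ℝ × ℝ).2 * (1 + (0 : ℝ × ℝ).1)) ^ 3 ≠ 0 := by simp [hm.ne']
    fun_prop (disch := assumption)
  have hFv : (fun x ↦ F (v x) - F 0) =O[atTop] fun x : ℝ ↦ x⁻¹ :=
    (hF.isBigO_sub.comp_tendsto hv0).trans (by simpa [Function.comp_def] using hv)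
  refine hFv.congr' ?_ EventuallyEq.rfl
  filter_upwards [eventually_ne_atTop 0] with x hx
  have hF0 : F 0 = 1 / m := by
    simp only [F, Prod.fst_zero, Prod.snd_zero]
    field_simp
    ring
  rw [hF0, sq_mul_deriv_deriv_div_mulExpAdd_eq m c hx]

theorem isBigO_deriv_deriv_div_mulExpAdd_sub (hm : 0 < m) :
    (fun x ↦ deriv (deriv (mulExpAdd m c)) x / deriv (mulExpAdd m c) x ^ 3
      - 1 / (m * mulExpAdd m c x ^ 2)) =O[atTop]
    fun x ↦ 1 / (mulExpAdd m c x ^ 2 * Real.log (mulExpAdd m c x)) := by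
  have hf := tendsto_mulExpAdd_atTop (c := c) hm
  have hlog : (fun x : ℝ ↦ x⁻¹) =O[atTop] fun x ↦ (Real.log (mulExpAdd m c x))⁻¹ := by
    refine (isBigO_log_mulExpAdd hm).inv_rev ?_
    filter_upwards [(Real.tendsto_log_atTop.comp hf).eventually_ne_atTop 0] with x hx h0
    exact absurd h0 hx
  refine ((isBigO_refl (fun x ↦ (mulExpAdd m c x ^ 2)⁻¹) atTop).mul
    ((isBigO_sq_mul_deriv_deriv_div_mulExpAdd_sub (c := c) hm).trans hlog)).congr' ?_ ?_
  · filter_upwards [hf.eventually_ne_atTop 0] with x hx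
    field_simp
  · exact .of_forall fun x ↦ by simp [mul_comm]

theorem exists_second_difference_mulExpAdd_eq (hm : 0 < m) {t₀ t₁ t₂ y : ℝ}
    (h₀ : |c| / m ≤ t₀) (h₁ : |c| / m ≤ t₁) (h₂ : |c| / m ≤ t₂) (hf₀ : mulExpAdd m c t₀ = y)
    (hf₁ : mulExpAdd m c t₁ = y + 1) (hf₂ : mulExpAdd m c t₂ = y + 2) :
    ∃ γ, t₀ ≤ γ ∧ mulExpAdd m c γ ∈ Icc y (y + 2) ∧
      2 * t₁ - t₀ - t₂ = deriv (deriv (mulExpAdd m c)) γ / deriv (mulExpAdd m c) γ ^ 3 := by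
  have hmono := strictMonoOn_mulExpAdd (c := c) hm
  have h₀₁ : t₀ < t₁ := (hmono.lt_iff_lt h₀ h₁).1 (by linarith)
  have h₁₂ : t₁ < t₂ := (hmono.lt_iff_lt h₁ h₂).1 (by linarith)
  obtain ⟨γ, ⟨hγ₀, hγ₂⟩, hγ⟩ := exists_second_difference_inverse_eq (h := 1) h₀₁ h₁₂ hf₀ hf₁
    (by linarith) (fun x _ ↦ (hasDerivAt_mulExpAdd m c x).differentiableAt.hasDerivAt)
    (fun x _ ↦ (hasDerivAt_deriv_mulExpAdd m c x).differentiableAt.hasDerivAt)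
    (fun x hx ↦ (deriv_mulExpAdd_pos hm (h₀.trans hx.1.le)).ne')
  have hcγ : |c| / m ≤ γ := h₀.trans hγ₀.le
  refine ⟨γ, hγ₀.le, ⟨?_, ?_⟩, by simpa using hγ⟩
  · exact hf₀ ▸ hmono.monotoneOn h₀ hcγ hγ₀.le
  · exact hf₂ ▸ hmono.monotoneOn hcγ h₂ hγ₂.le

theorem exists_tendsto_second_difference_mulExpAdd_eq {ι : Type*} {l : Filter ι}
    {y t₀ t₁ t₂ : ι → ℝ} (hm : 0 < m) (hy : Tendsto y l atTop)
    (ht₀ : ∀ᶠ i in l, 0 < t₀ i ∧ mulExpAdd m c (t₀ i) = y i)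
    (ht₁ : ∀ᶠ i in l, 0 < t₁ i ∧ mulExpAdd m c (t₁ i) = y i + 1)
    (ht₂ : ∀ᶠ i in l, 0 < t₂ i ∧ mulExpAdd m c (t₂ i) = y i + 2) :
    ∃ γ : ι → ℝ, Tendsto γ l atTop ∧ (∀ᶠ i in l, mulExpAdd m c (γ i) ∈ Icc (y i) (y i + 2)) ∧
      ∀ᶠ i in l, 2 * t₁ i - t₀ i - t₂ i
        = deriv (deriv (mulExpAdd m c)) (γ i) / deriv (mulExpAdd m c) (γ i) ^ 3 := by
  have ht₀_top := tendsto_atTop_of_mulExpAdd_eq hm.le hy ht₀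
  have ht₁_top :=
    tendsto_atTop_of_mulExpAdd_eq hm.le (tendsto_atTop_add_const_right l 1 hy) ht₁
  have ht₂_top :=
    tendsto_atTop_of_mulExpAdd_eq hm.le (tendsto_atTop_add_const_right l 2 hy) ht₂
  have hlarge : ∀ᶠ i in l, |c| / m ≤ t₀ i ∧ |c| / m ≤ t₁ i ∧ |c| / m ≤ t₂ i :=
    (ht₀_top.eventually_ge_atTop _).and
      ((ht₁_top.eventually_ge_atTop _).and (ht₂_top.eventually_ge_atTop _))
  obtain ⟨s, hs, hmem⟩ := (hlarge.and (ht₀.and (ht₁.and ht₂))).exists_mem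
  have hex : ∀ i ∈ s, ∃ γ, t₀ i ≤ γ ∧ mulExpAdd m c γ ∈ Icc (y i) (y i + 2) ∧
      2 * t₁ i - t₀ i - t₂ i
        = deriv (deriv (mulExpAdd m c)) γ / deriv (mulExpAdd m c) γ ^ 3 := fun i hi ↦ by
    obtain ⟨⟨hc₀, hc₁, hc₂⟩, h₀, h₁, h₂⟩ := hmem i hi
    exact exists_second_difference_mulExpAdd_eq hm hc₀ hc₁ hc₂ h₀.2 h₁.2 h₂.2
  choose! γ hγ_ge hγ_mem hγ_eq using hex
  exact ⟨γ, tendsto_atTop_mono' l (eventually_of_mem hs hγ_ge) ht₀_top,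
    eventually_of_mem hs hγ_mem, eventually_of_mem hs hγ_eq⟩

end MulExpAdd

theorem stmt_13_general {ι : Type*} {l : Filter ι} {m c : ℝ} {y t₀ t₁ t₂ : ι → ℝ} (hm : 0 < m)
    (hy : Tendsto y l atTop)
    (ht₀ : ∀ᶠ i in l, 0 < t₀ i ∧ t₀ i * (Real.exp (m * t₀ i) + c) = y i)
    (ht₁ : ∀ᶠ i in l, 0 < t₁ i ∧ t₁ i * (Real.exp (m * t₁ i) + c) = y i + 1)
    (ht₂ : ∀ᶠ i in l, 0 < t₂ i ∧ t₂ i * (Real.exp (m * t₂ i) + c) = y i + 2) :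
    (fun i ↦ 2 * t₁ i - t₀ i - t₂ i - 1 / (m * y i ^ 2)) =O[l]
      fun i ↦ 1 / (y i ^ 2 * Real.log (y i)) := by
  obtain ⟨γ, hγ, hfγ, hγ_eq⟩ :=
    exists_tendsto_second_difference_mulExpAdd_eq hm hy ht₀ ht₁ ht₂
  have hmain := ((isBigO_deriv_deriv_div_mulExpAdd_sub hm).comp_tendsto hγ).trans
    (isBigO_one_div_sq_mul_log_of_le hy (hfγ.mono fun _ h ↦ h.1))
  have hshift := (isBigO_one_div_sq_sub_of_mem_Icc hy hfγ).const_mul_left (1 / m)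
  refine (hmain.add hshift).congr' ?_ EventuallyEq.rfl
  filter_upwards [hγ_eq] with i hi
  rw [hi, Function.comp_apply]
  ring

/-- If `t i` is the unique positive solution of `t·(e^{m·t} + c) = n + i`, then
`2·t_1 − t_0 − t_2 = 1/(m·n²) + O(1/(n²·log n))` as `n → ∞`. -/
theorem stmt_13 (m c : ℕ) (hm : 0 < m) (t0 t1 t2 : ℕ → ℝ)
    (ht0 : ∀ n : ℕ, 2 ≤ n → 0 < t0 n ∧ t0 n * (Real.exp (m * t0 n) + c) = n)
    (ht1 : ∀ n : ℕ, 2 ≤ n → 0 < t1 n ∧ t1 n * (Real.exp (m * t1 n) + c) = n + 1)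
    (ht2 : ∀ n : ℕ, 2 ≤ n → 0 < t2 n ∧ t2 n * (Real.exp (m * t2 n) + c) = n + 2) :
    (fun n : ℕ => 2 * t1 n - t0 n - t2 n - 1 / (m * (n : ℝ) ^ 2))
      =O[atTop] (fun n : ℕ => 1 / ((n : ℝ) ^ 2 * Real.log n)) :=
  stmt_13_general (Nat.cast_pos.2 hm) tendsto_natCast_atTop_atTop
    (eventually_atTop.2 ⟨2, ht0⟩) (eventually_atTop.2 ⟨2, ht1⟩) (eventually_atTop.2 ⟨2, ht2⟩)
end
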